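/- Fix ε > 0. Let W_n be the step graphons of symmetric nonnegative n×n matrices and let W ∈ L¹((0,1)²) be nonnegative and symmetric, with sup_n ‖W_n‖_{L¹} < ∞ and ‖W_n − W‖_□ → 0. On the set Y of Young measures ν with ν_x([−1,1]) = 1 for a.e. x, define F_n(ν) = ∫₀¹∫₀¹ W_n(x,y)|u(x)−u(y)|² dx dy + (1/ε)∫₀¹ Φ(u(x)) dx if ν = δ_u for some n-step function u : (0,1) → [−1,1], and F_n(ν) = +∞ otherwise. Then F_n Γ-converges on Y, with respect to narrow convergence of Young measures, to the graphon Ginzburg–Landau functional GL^W_ε. -/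

import Mathlib

open MeasureTheory Filter
open scoped Classical

noncomputable section

/-- The open unit interval `(0,1)` as a subset of `ℝ`. -/
def I01 : Set ℝ := Set.Ioo 0 1

/-- The double-well potential `Φ(s) = (s² − 1)²`. -/
def Phi (s : ℝ) : ℝ := (s ^ 2 - 1) ^ 2

/-- A Young measure on `(0,1)`: a measurable family of Borel probability measures on `ℝ`. -/
def IsYoungMeasure (ν : ℝ → Measure ℝ) : Prop :=
  Measurable ν ∧ ∀ x, IsProbabilityMeasure (ν x)

/-- The Young measure associated with a measurable function `u`: `(δ_u)_x = δ_{u(x)}`. -/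
def deltaYM (u : ℝ → ℝ) : ℝ → Measure ℝ := fun x => Measure.dirac (u x)

/-- The type of Young measures `ν` with `ν_x([−1,1]) = 1` for a.e. `x ∈ (0,1)`. -/
def YMb := {ν : ℝ → Measure ℝ // IsYoungMeasure ν ∧
  ∀ᵐ x ∂(volume.restrict I01), ν x (Set.Icc (-1 : ℝ) 1) = 1}

/-- Narrow convergence of Young measures. -/
def NarrowConv (ν : ℕ → ℝ → Measure ℝ) (μ : ℝ → Measure ℝ) : Prop :=
  ∀ f : ℝ → ℝ, Continuous f → (∃ C, ∀ s, |f s| ≤ C) →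
    ∀ g : ℝ → ℝ, IntegrableOn g I01 →
      Tendsto (fun n => ∫ x in I01, g x * ∫ t, f t ∂(ν n x)) atTop
        (nhds (∫ x in I01, g x * ∫ t, f t ∂(μ x)))

/-- The cut norm of a kernel `V ∈ L¹((0,1)²)`. -/
def cutNorm (V : ℝ → ℝ → ℝ) : ℝ :=
  sSup {r : ℝ | ∃ f g : ℝ → ℝ, Measurable f ∧ Measurable g ∧
    (∀ x, f x ∈ Set.Icc (-1 : ℝ) 1) ∧ (∀ x, g x ∈ Set.Icc (-1 : ℝ) 1) ∧
    r = |∫ x in I01, ∫ y in I01, V x y * f x * g y|}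

/-- The index `i` with `x ∈ ((i−1)/n, i/n]`, shifted to start at `0`. -/
def stepIdx (n : ℕ) (x : ℝ) : ℕ := ⌈(n : ℝ) * x⌉₊ - 1

/-- The step graphon of an `n × n` matrix `A`. -/
def stepGraphon (n : ℕ) (A : Fin n → Fin n → ℝ) (x y : ℝ) : ℝ :=
  if hx : stepIdx n x < n then
    if hy : stepIdx n y < n then A ⟨stepIdx n x, hx⟩ ⟨stepIdx n y, hy⟩ else 0
  else 0

/-- An `n`-step function: constant on each interval `I_i = ((i−1)/n, i/n]`. -/
def IsStepFun (n : ℕ) (u : ℝ → ℝ) : Prop :=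
  ∀ i : Fin n, ∀ x ∈ Set.Ioc ((i : ℝ) / n) (((i : ℝ) + 1) / n),
    ∀ y ∈ Set.Ioc ((i : ℝ) / n) (((i : ℝ) + 1) / n), u x = u y

/-- The graphon Dirichlet energy of a Young measure. -/
def graphonDirichlet (V : ℝ → ℝ → ℝ) (ν : ℝ → Measure ℝ) : ℝ :=
  ∫ x in I01, ∫ y in I01, V x y * ∫ t, (∫ s, |s - t| ^ 2 ∂(ν x)) ∂(ν y)

/-- The graphon Ginzburg–Landau functional on Young measures. -/
def graphonGL (W : ℝ → ℝ → ℝ) (ε : ℝ) (ν : ℝ → Measure ℝ) : ℝ :=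
  graphonDirichlet W ν + (1 / ε) * ∫ x in I01, ∫ t, Phi t ∂(ν x)

/-- The graph Ginzburg–Landau functional on Young measures: equal to the graph GL energy of
`u` if `ν = δ_u` for some `n`-step function `u : (0,1) → [−1,1]`, and `+∞` otherwise. -/
def graphGLFn (n : ℕ) (Wn : ℝ → ℝ → ℝ) (ε : ℝ) (ν : ℝ → Measure ℝ) : EReal :=
  if h : ∃ u : ℝ → ℝ, IsStepFun n u ∧ Measurable u ∧
      (∀ x, u x ∈ Set.Icc (-1 : ℝ) 1) ∧ ν = deltaYM u then
    (((∫ x in I01, ∫ y in I01, Wn x y * |h.choose x - h.choose y| ^ 2)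
        + (1 / ε) * ∫ x in I01, Phi (h.choose x) : ℝ) : EReal)
  else ⊤

/-- Γ-convergence of functionals with values in `ℝ ∪ {±∞}`. -/
def GammaConv {X : Type*} (conv : (ℕ → X) → X → Prop)
    (F : ℕ → X → EReal) (Flim : X → EReal) : Prop :=
  (∀ (xs : ℕ → X) (x : X), conv xs x →
      Flim x ≤ Filter.liminf (fun n => F n (xs n)) Filter.atTop) ∧
  (∀ x : X, ∃ xs : ℕ → X, conv xs x ∧
      Filter.limsup (fun n => F n (xs n)) Filter.atTop ≤ Flim x)

/-!
Since `|s - t|² = s² - 2st + t²`, the Dirichlet energy of `ν` is a combination of bilinear forms of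
the kernel evaluated at the first two moment functions `x ↦ ∫ tᵖ dν_x`. On measures supported in
`[-1, 1]`, narrow convergence is weak-* convergence in `L^∞` of all moment functions (Weierstrass),
and the bilinear form of an `L¹` kernel is jointly weak-* continuous on bounded sets. Replacing `W`
by `Wₙ` costs at most the cut norm of `Wₙ - W`, uniformly over functions bounded by `1`. Hence
`GL^{Wₙ}_ε(νₙ) → GL^W_ε(ν)` along every narrowly convergent sequence, and only the existence of
step functions `uₙ` with `δ_{uₙ} → ν` remains to be shown.

For this, average `ν` over each of the `n` cells and choose one value per cell greedily: embedding
the first `n` moments in a Hilbert space, some point of the cell average moves the accumulated error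
by a vector of bounded length making an obtuse angle with it, so after `k` cells the error is
`O(√k)`. After division by `n` all integrals of moments over intervals `(0, t)` converge.
-/

open ProbabilityTheory
open scoped Topology NNReal

section WeakStar

variable {α ι : Type*} [MeasurableSpace α] {μ : Measure α} {l : Filter ι} {C : ℝ}

/-- `f` represents an element of the closed ball of radius `C` of `L^∞(μ)`. -/
structure AEBounded (μ : Measure α) (C : ℝ) (f : α → ℝ) : Prop where
  aestronglyMeasurable : AEStronglyMeasurable f μ
  ae_abs_le : ∀ᵐ x ∂μ, |f x| ≤ C

namespace AEBounded

variable {f g : α → ℝ}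

lemma of_forall (hf : Measurable f) (hC : ∀ x, |f x| ≤ C) : AEBounded μ C f :=
  ⟨hf.aestronglyMeasurable, Eventually.of_forall hC⟩

lemma one : AEBounded μ 1 (fun _ => 1) :=
  of_forall measurable_const fun _ => abs_one.le

lemma sub {D : ℝ} (hf : AEBounded μ C f) (hg : AEBounded μ D g) :
    AEBounded μ (C + D) (fun x => f x - g x) where
  aestronglyMeasurable := hf.aestronglyMeasurable.sub hg.aestronglyMeasurable
  ae_abs_le := by
    filter_upwards [hf.ae_abs_le, hg.ae_abs_le] with x hfx hgx
    exact (abs_sub _ _).trans (add_le_add hfx hgx)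

lemma comp_fst {β : Type*} [MeasurableSpace β] {ν : Measure β} (hf : AEBounded μ C f) :
    AEBounded (μ.prod ν) C (fun z => f z.1) :=
  ⟨hf.aestronglyMeasurable.comp_fst, Measure.quasiMeasurePreserving_fst.ae hf.ae_abs_le⟩

lemma comp_snd {β : Type*} [MeasurableSpace β] {ν : Measure β} (hf : AEBounded μ C f) :
    AEBounded (ν.prod μ) C (fun z => f z.2) :=
  ⟨hf.aestronglyMeasurable.comp_snd, Measure.quasiMeasurePreserving_snd.ae hf.ae_abs_le⟩

lemma integrable [IsFiniteMeasure μ] (hf : AEBounded μ C f) : Integrable f μ :=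
  .of_bound hf.aestronglyMeasurable C hf.ae_abs_le

lemma integrable_mul (hf : AEBounded μ C f) (hg : Integrable g μ) :
    Integrable (fun x => g x * f x) μ :=
  hg.mul_bdd hf.aestronglyMeasurable hf.ae_abs_le

lemma abs_integral_mul_le (hf : AEBounded μ C f) (hg : Integrable g μ) :
    |∫ x, g x * f x ∂μ| ≤ C * ∫ x, |g x| ∂μ := by
  rw [← integral_const_mul, ← Real.norm_eq_abs]
  refine norm_integral_le_of_norm_le (hg.abs.const_mul C) ?_
  filter_upwards [hf.ae_abs_le] with x hx
  rw [norm_mul, mul_comm]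
  exact mul_le_mul_of_nonneg_right hx (abs_nonneg _)

lemma lipschitzWith_integral_mul {C : ℝ≥0} (hf : AEBounded μ C f) :
    LipschitzWith C (fun g : α →₁[μ] ℝ => ∫ x, g x * f x ∂μ) := by
  refine .of_dist_le_mul fun g h => ?_
  have hg := L1.integrable_coeFn g
  have hh := L1.integrable_coeFn h
  rw [Real.dist_eq, ← integral_sub (hf.integrable_mul hg) (hf.integrable_mul hh),
    L1.dist_eq_integral_dist]
  simp only [← sub_mul, Real.dist_eq]
  exact hf.abs_integral_mul_le (hg.sub hh)

end AEBounded

/-- Weak-* convergence in `L^∞(μ) = L¹(μ)'`, expressed for representatives. -/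
def TendstoWeakStar (μ : Measure α) (f : ι → α → ℝ) (l : Filter ι) (f₀ : α → ℝ) : Prop :=
  ∀ g : α → ℝ, Integrable g μ →
    Tendsto (fun i => ∫ x, g x * f i x ∂μ) l (𝓝 (∫ x, g x * f₀ x ∂μ))

lemma tendsto_of_forall_approx {u : ι → ℝ} {u₀ : ℝ}
    (h : ∀ ε > 0, ∃ (v : ι → ℝ) (v₀ : ℝ), Tendsto v l (𝓝 v₀) ∧
      (∀ i, |u i - v i| ≤ ε) ∧ |u₀ - v₀| ≤ ε) : Tendsto u l (𝓝 u₀) := by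
  refine Metric.tendsto_nhds.2 fun ε hε => ?_
  obtain ⟨v, v₀, hv, huv, huv₀⟩ := h (ε / 3) (by positivity)
  filter_upwards [Metric.tendsto_nhds.1 hv (ε / 3) (by positivity)] with i hi
  calc dist (u i) u₀ ≤ dist (u i) (v i) + dist (v i) v₀ + dist v₀ u₀ := dist_triangle4 _ _ _ _
    _ < ε / 3 + ε / 3 + ε / 3 := by
      rw [dist_comm v₀]
      exact add_lt_add_of_lt_of_le (add_lt_add_of_le_of_lt (huv i) hi) huv₀
    _ = ε := by ring

namespace TendstoWeakStar

variable {f : ι → α → ℝ} {f₀ : α → ℝ}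

lemma const : TendstoWeakStar μ (fun _ => f₀) l f₀ := fun _ _ => tendsto_const_nhds

lemma congr_ae {f' : ι → α → ℝ} {f₀' : α → ℝ} (h : TendstoWeakStar μ f l f₀)
    (hf : ∀ i, f i =ᵐ[μ] f' i) (hf₀ : f₀ =ᵐ[μ] f₀') : TendstoWeakStar μ f' l f₀' := by
  intro g hg
  have integral_congr {a b : α → ℝ} (hab : a =ᵐ[μ] b) :
      ∫ x, g x * a x ∂μ = ∫ x, g x * b x ∂μ :=
    integral_congr_ae (hab.mono fun x hx => congrArg (g x * ·) hx)
  simpa only [integral_congr (hf _), integral_congr hf₀] using h g hg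

lemma sum_const_mul {κ : Type*} {f : κ → ι → α → ℝ} {f₀ : κ → α → ℝ} (s : Finset κ) (c : κ → ℝ)
    (hf : ∀ k i, AEBounded μ C (f k i)) (hf₀ : ∀ k, AEBounded μ C (f₀ k))
    (h : ∀ k, TendstoWeakStar μ (f k) l (f₀ k)) :
    TendstoWeakStar μ (fun i x => ∑ k ∈ s, c k * f k i x) l (fun x => ∑ k ∈ s, c k * f₀ k x) := by
  intro g hg
  have integral_sum (a : κ → α → ℝ) (ha : ∀ k, AEBounded μ C (a k)) :
      ∫ x, g x * ∑ k ∈ s, c k * a k x ∂μ = ∑ k ∈ s, c k * ∫ x, g x * a k x ∂μ := by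
    simp only [Finset.mul_sum, ← integral_const_mul, mul_left_comm (g _)]
    exact integral_finsetSum _ fun k _ => ((ha k).integrable_mul hg).const_mul (c k)
  simp only [integral_sum _ fun k => hf k _, integral_sum _ hf₀]
  exact tendsto_finsetSum _ fun k _ => (h k g hg).const_mul (c k)

lemma of_forall_approx (hf : ∀ i, AEBounded μ C (f i)) (hf₀ : AEBounded μ C f₀)
    (h : ∀ ε > 0, ∃ (a : ι → α → ℝ) (a₀ : α → ℝ), TendstoWeakStar μ a l a₀ ∧
      (∀ i, AEBounded μ ε (fun x => f i x - a i x)) ∧ AEBounded μ ε (fun x => f₀ x - a₀ x)) :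
    TendstoWeakStar μ f l f₀ := by
  intro g hg
  refine tendsto_of_forall_approx fun ε hε => ?_
  have : 0 ≤ ∫ x, |g x| ∂μ := integral_nonneg fun x => abs_nonneg (g x)
  obtain ⟨a, a₀, ha, hfa, hfa₀⟩ := h (ε / (∫ x, |g x| ∂μ + 1)) (by positivity)
  have abs_integral_sub_le {b c : α → ℝ} (hb : AEBounded μ C b)
      (hbc : AEBounded μ (ε / (∫ x, |g x| ∂μ + 1)) (fun x => b x - c x)) :
      |∫ x, g x * b x ∂μ - ∫ x, g x * c x ∂μ| ≤ ε := by
    have hc : Integrable (fun x => g x * c x) μ :=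
      ((hb.sub hbc).integrable_mul hg).congr (Eventually.of_forall fun x => by simp)
    rw [← integral_sub (hb.integrable_mul hg) hc]
    simp only [← mul_sub]
    refine (hbc.abs_integral_mul_le hg).trans ?_
    rw [div_mul_eq_mul_div]
    exact div_le_of_le_mul₀ (by positivity) hε.le (by gcongr; linarith)
  exact ⟨_, _, ha g hg, fun i => abs_integral_sub_le (hf i) (hfa i), abs_integral_sub_le hf₀ hfa₀⟩

lemma of_setIntegral {C : ℝ≥0} (hf : ∀ i, AEBounded μ C (f i)) (hf₀ : AEBounded μ C f₀)
    (h : ∀ s, MeasurableSet s → Tendsto (fun i => ∫ x in s, f i x ∂μ) l (𝓝 (∫ x in s, f₀ x ∂μ))) :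
    TendstoWeakStar μ f l f₀ := by
  refine fun g hg => Integrable.induction (fun g : α → ℝ => Tendsto (fun i => ∫ x, g x * f i x ∂μ) l
    (𝓝 (∫ x, g x * f₀ x ∂μ))) ?_ ?_ ?_ ?_ hg
  · intro c s hs _
    have integral_indicator_mul (a : α → ℝ) :
        ∫ x, s.indicator (fun _ => c) x * a x ∂μ = c * ∫ x in s, a x ∂μ := by
      simp only [← Set.indicator_mul_left, integral_indicator hs, integral_const_mul]
    simpa only [integral_indicator_mul] using (h s hs).const_mul c
  · intro g₁ g₂ _ hg₁ hg₂ h₁ h₂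
    have integral_add_mul {a : α → ℝ} (ha : AEBounded μ C a) :
        ∫ x, (g₁ + g₂) x * a x ∂μ = ∫ x, g₁ x * a x ∂μ + ∫ x, g₂ x * a x ∂μ := by
      simp only [Pi.add_apply, add_mul]
      exact integral_add (ha.integrable_mul hg₁) (ha.integrable_mul hg₂)
    simpa only [integral_add_mul (hf _), integral_add_mul hf₀] using h₁.add h₂
  · exact (LipschitzWith.uniformEquicontinuous _ C
      fun i => (hf i).lipschitzWith_integral_mul).equicontinuous.isClosed_setOfPred_tendsto
        hf₀.lipschitzWith_integral_mul.continuous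
  · intro g₁ g₂ hg₁₂ _ h₁
    have integral_congr (a : α → ℝ) : ∫ x, g₁ x * a x ∂μ = ∫ x, g₂ x * a x ∂μ :=
      integral_congr_ae (hg₁₂.mono fun x hx => congrArg (· * a x) hx)
    simpa only [integral_congr] using h₁

lemma tendsto_integral_mul {h : ι → α → ℝ} {h₀ : α → ℝ} (hf : ∀ i, AEBounded μ C (f i))
    (hh : ∀ i, Integrable (h i) μ) (hh₀ : Integrable h₀ μ)
    (hff₀ : TendstoWeakStar μ f l f₀)
    (hhh₀ : Tendsto (fun i => ∫ x, |h i x - h₀ x| ∂μ) l (𝓝 0)) :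
    Tendsto (fun i => ∫ x, h i x * f i x ∂μ) l (𝓝 (∫ x, h₀ x * f₀ x ∂μ)) := by
  have error_tendsto : Tendsto (fun i => ∫ x, (h i x - h₀ x) * f i x ∂μ) l (𝓝 0) :=
    squeeze_zero_norm (fun i => (hf i).abs_integral_mul_le ((hh i).sub hh₀))
      (by simpa only [mul_zero] using hhh₀.const_mul C)
  have split (i : ι) : ∫ x, h i x * f i x ∂μ
      = ∫ x, (h i x - h₀ x) * f i x ∂μ + ∫ x, h₀ x * f i x ∂μ := by
    have hsub : Integrable (fun x => h i x - h₀ x) μ := (hh i).sub hh₀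
    rw [← integral_add ((hf i).integrable_mul hsub) ((hf i).integrable_mul hh₀)]
    simp only [← add_mul, sub_add_cancel]
  simpa only [split, zero_add] using error_tendsto.add (hff₀ h₀ hh₀)

end TendstoWeakStar

lemma tendsto_setIntegral_of_Iic {μ : Measure ℝ} [IsFiniteMeasure μ]
    {f : ι → ℝ → ℝ} {f₀ : ℝ → ℝ} (hf : ∀ i, AEBounded μ C (f i)) (hf₀ : AEBounded μ C f₀)
    (huniv : Tendsto (fun i => ∫ x, f i x ∂μ) l (𝓝 (∫ x, f₀ x ∂μ)))
    (hIic : ∀ t, Tendsto (fun i => ∫ x in Set.Iic t, f i x ∂μ) l (𝓝 (∫ x in Set.Iic t, f₀ x ∂μ)))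
    {s : Set ℝ} (hs : MeasurableSet s) :
    Tendsto (fun i => ∫ x in s, f i x ∂μ) l (𝓝 (∫ x in s, f₀ x ∂μ)) := by
  induction s, hs using MeasurableSpace.induction_on_inter
    (BorelSpace.measurable_eq.trans (borel_eq_generateFrom_Iic ℝ)) isPiSystem_Iic with
  | empty => simpa using tendsto_const_nhds
  | basic s hs =>
    obtain ⟨t, rfl⟩ := hs
    exact hIic t
  | compl s hs ih =>
    have integral_compl {a : ℝ → ℝ} (ha : AEBounded μ C a) :
        ∫ x in sᶜ, a x ∂μ = ∫ x, a x ∂μ - ∫ x in s, a x ∂μ :=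
      eq_sub_of_add_eq' (integral_add_compl hs ha.integrable)
    simpa only [integral_compl (hf _), integral_compl hf₀] using huniv.sub ih
  | iUnion A hdisj hA ih =>
    have integral_iUnion_eq {a : ℝ → ℝ} (ha : AEBounded μ C a) :
        ∫ x in ⋃ k, A k, a x ∂μ = ∑' k, ∫ x in A k, a x ∂μ :=
      integral_iUnion hA hdisj ha.integrable.integrableOn
    have summable_bound : Summable fun k => C * μ.real (A k) := by
      refine (ENNReal.summable_toReal ?_).mul_left C
      exact measure_iUnion hdisj hA ▸ measure_ne_top μ _
    simp only [integral_iUnion_eq (hf _), integral_iUnion_eq hf₀]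
    exact tendsto_tsum_of_dominated_convergence summable_bound ih
      (Eventually.of_forall fun i k => norm_setIntegral_le_of_norm_le_const_ae (measure_lt_top μ _)
        (ae_restrict_of_ae (hf i).ae_abs_le))

end WeakStar

section KernelForm

variable {α β ι : Type*} [MeasurableSpace α] [MeasurableSpace β] {μ : Measure α} {ν : Measure β}
  {V : α → β → ℝ} {C D : ℝ}

/-- The bilinear form `(f, g) ↦ ∬ V(x, y) f(x) g(y)` of a kernel `V`, written as an iterated
integral to match the definition of the cut norm. -/
def kernelForm (μ : Measure α) (ν : Measure β) (V : α → β → ℝ) (f : α → ℝ) (g : β → ℝ) : ℝ :=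
  ∫ x, ∫ y, V x y * f x * g y ∂ν ∂μ

lemma kernelForm_eq_integral_mul (f : α → ℝ) (g : β → ℝ) :
    kernelForm μ ν V f g = ∫ x, (∫ y, V x y * g y ∂ν) * f x ∂μ := by
  simp only [kernelForm, mul_right_comm _ (f _), integral_mul_const]

lemma kernelForm_congr_ae {f f' : α → ℝ} {g g' : β → ℝ} (hf : f =ᵐ[μ] f') (hg : g =ᵐ[ν] g') :
    kernelForm μ ν V f g = kernelForm μ ν V f' g' := by
  have inner_congr (x : α) : ∫ y, V x y * g y ∂ν = ∫ y, V x y * g' y ∂ν :=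
    integral_congr_ae (hg.mono fun y hy => congrArg (V x y * ·) hy)
  simp only [kernelForm_eq_integral_mul, inner_congr]
  exact integral_congr_ae (hf.mono fun x hx => congrArg (_ * ·) hx)

lemma AEBounded.integrable_kernel_mul {f : α → ℝ} {g : β → ℝ} (hf : AEBounded μ C f)
    (hg : AEBounded ν D g) (hV : Integrable (Function.uncurry V) (μ.prod ν)) :
    Integrable (fun z : α × β => V z.1 z.2 * f z.1 * g z.2) (μ.prod ν) :=
  hg.comp_snd.integrable_mul (hf.comp_fst.integrable_mul hV)

variable [SFinite ν]

lemma AEBounded.integrable_integral_kernel_mul {g : β → ℝ} (hg : AEBounded ν D g)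
    (hV : Integrable (Function.uncurry V) (μ.prod ν)) :
    Integrable (fun x => ∫ y, V x y * g y ∂ν) μ :=
  (hg.comp_snd.integrable_mul hV).integral_prod_left

variable [SFinite μ]

lemma kernelForm_eq_integral_prod {f : α → ℝ} {g : β → ℝ} (hf : AEBounded μ C f)
    (hg : AEBounded ν D g) (hV : Integrable (Function.uncurry V) (μ.prod ν)) :
    kernelForm μ ν V f g = ∫ z, V z.1 z.2 * f z.1 * g z.2 ∂(μ.prod ν) :=
  (integral_prod _ (hf.integrable_kernel_mul hg hV)).symm

lemma kernelForm_sub {W : α → β → ℝ} {f : α → ℝ} {g : β → ℝ} (hf : AEBounded μ C f)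
    (hg : AEBounded ν D g) (hV : Integrable (Function.uncurry V) (μ.prod ν))
    (hW : Integrable (Function.uncurry W) (μ.prod ν)) :
    kernelForm μ ν (fun x y => V x y - W x y) f g
      = kernelForm μ ν V f g - kernelForm μ ν W f g := by
  have hVW : Integrable (Function.uncurry fun x y => V x y - W x y) (μ.prod ν) := hV.sub hW
  rw [kernelForm_eq_integral_prod hf hg hV, kernelForm_eq_integral_prod hf hg hW,
    kernelForm_eq_integral_prod hf hg hVW,
    ← integral_sub (hf.integrable_kernel_mul hg hV) (hf.integrable_kernel_mul hg hW)]
  simp only [sub_mul]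

lemma abs_kernelForm_le {f : α → ℝ} {g : β → ℝ} (hf : AEBounded μ C f) (hg : AEBounded ν D g)
    (hD : 0 ≤ D) (hV : Integrable (Function.uncurry V) (μ.prod ν)) :
    |kernelForm μ ν V f g| ≤ D * (C * ∫ z, |V z.1 z.2| ∂(μ.prod ν)) := by
  have hVf := hf.comp_fst.integrable_mul hV
  rw [kernelForm_eq_integral_prod hf hg hV]
  refine (hg.comp_snd.abs_integral_mul_le hVf).trans (mul_le_mul_of_nonneg_left ?_ hD)
  rw [← integral_const_mul]
  refine integral_mono_ae hVf.abs (hV.abs.const_mul C) ?_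
  filter_upwards [hf.comp_fst.ae_abs_le] with z hz
  rw [abs_mul, mul_comm]
  exact mul_le_mul_of_nonneg_right hz (abs_nonneg _)

lemma TendstoWeakStar.tendsto_integral_abs_kernel_sub {l : Filter ι} [l.IsCountablyGenerated]
    {g : ι → β → ℝ} {g₀ : β → ℝ} (h : TendstoWeakStar ν g l g₀) (hg : ∀ i, AEBounded ν C (g i))
    (hg₀ : AEBounded ν C g₀) (hV : Integrable (Function.uncurry V) (μ.prod ν)) :
    Tendsto (fun i => ∫ x, |∫ y, V x y * g i y ∂ν - ∫ y, V x y * g₀ y ∂ν| ∂μ) l (𝓝 0) := by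
  rw [← integral_zero α ℝ (μ := μ)]
  refine tendsto_integral_filter_of_dominated_convergence
    (fun x => C * ∫ y, |V x y| ∂ν + C * ∫ y, |V x y| ∂ν)
    (.of_forall fun i => (((hg i).integrable_integral_kernel_mul hV).sub
      (hg₀.integrable_integral_kernel_mul hV)).abs.1)
    (.of_forall fun i => ?_) ?_ ?_
  · filter_upwards [hV.prod_right_ae] with x hx
    rw [Real.norm_eq_abs, abs_abs]
    exact (abs_sub _ _).trans
      (add_le_add ((hg i).abs_integral_mul_le hx) (hg₀.abs_integral_mul_le hx))
  · exact (hV.integral_norm_prod_left.const_mul C).add (hV.integral_norm_prod_left.const_mul C)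
  · filter_upwards [hV.prod_right_ae] with x hx
    simpa only [sub_self, abs_zero] using
      ((h (V x) hx).sub_const (∫ y, V x y * g₀ y ∂ν)).abs

lemma TendstoWeakStar.tendsto_kernelForm {l : Filter ι} [l.IsCountablyGenerated]
    {f : ι → α → ℝ} {f₀ : α → ℝ} {g : ι → β → ℝ} {g₀ : β → ℝ}
    (hff₀ : TendstoWeakStar μ f l f₀) (hgg₀ : TendstoWeakStar ν g l g₀)
    (hf : ∀ i, AEBounded μ C (f i)) (hg : ∀ i, AEBounded ν D (g i)) (hg₀ : AEBounded ν D g₀)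
    (hV : Integrable (Function.uncurry V) (μ.prod ν)) :
    Tendsto (fun i => kernelForm μ ν V (f i) (g i)) l (𝓝 (kernelForm μ ν V f₀ g₀)) := by
  simp only [kernelForm_eq_integral_mul]
  exact hff₀.tendsto_integral_mul hf (fun i => (hg i).integrable_integral_kernel_mul hV)
    (hg₀.integrable_integral_kernel_mul hV)
    (hgg₀.tendsto_integral_abs_kernel_sub hg hg₀ hV)

end KernelForm

section CutNorm

/-- Lebesgue measure on `(0,1)`. -/
abbrev unitVolume : Measure ℝ := volume.restrict I01

instance : IsProbabilityMeasure unitVolume := ⟨by simp [I01]⟩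

variable {V : ℝ → ℝ → ℝ}

lemma AEBounded.exists_measurable_mem_Icc {α : Type*} [MeasurableSpace α] {μ : Measure α} {C : ℝ}
    {f : α → ℝ} (hf : AEBounded μ C f) (hC : 0 ≤ C) :
    ∃ f' : α → ℝ, Measurable f' ∧ (∀ x, f' x ∈ Set.Icc (-C) C) ∧ f =ᵐ[μ] f' := by
  have hCC := neg_le_self hC
  refine ⟨fun x => Set.projIcc (-C) C hCC (hf.aestronglyMeasurable.mk f x),
    (continuous_subtype_val.comp continuous_projIcc).measurable.comp
      hf.aestronglyMeasurable.stronglyMeasurable_mk.measurable, fun x => Subtype.coe_prop _, ?_⟩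
  filter_upwards [hf.ae_abs_le, hf.aestronglyMeasurable.ae_eq_mk] with x hx hfx
  rw [← hfx, Set.projIcc_of_mem hCC (abs_le.1 hx)]

lemma abs_kernelForm_le_cutNorm {f g : ℝ → ℝ} (hf : AEBounded unitVolume 1 f)
    (hg : AEBounded unitVolume 1 g)
    (hV : Integrable (Function.uncurry V) (unitVolume.prod unitVolume)) :
    |kernelForm unitVolume unitVolume V f g| ≤ cutNorm V := by
  obtain ⟨f', hf'meas, hf'mem, hff'⟩ := hf.exists_measurable_mem_Icc zero_le_one
  obtain ⟨g', hg'meas, hg'mem, hgg'⟩ := hg.exists_measurable_mem_Icc zero_le_one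
  rw [kernelForm_congr_ae hff' hgg']
  refine le_csSup ⟨1 * (1 * ∫ z, |V z.1 z.2| ∂(unitVolume.prod unitVolume)), ?_⟩
    ⟨f', g', hf'meas, hg'meas, hf'mem, hg'mem, rfl⟩
  rintro _ ⟨a, b, ha, hb, haI, hbI, rfl⟩
  exact abs_kernelForm_le (.of_forall ha fun x => abs_le.2 (haI x))
    (.of_forall hb fun x => abs_le.2 (hbI x)) zero_le_one hV

lemma TendstoWeakStar.tendsto_kernelForm_of_cutNorm {ι : Type*} {l : Filter ι}
    [l.IsCountablyGenerated] {Vs : ι → ℝ → ℝ → ℝ} {f g : ι → ℝ → ℝ} {f₀ g₀ : ℝ → ℝ}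
    (hff₀ : TendstoWeakStar unitVolume f l f₀) (hgg₀ : TendstoWeakStar unitVolume g l g₀)
    (hf : ∀ i, AEBounded unitVolume 1 (f i)) (hg : ∀ i, AEBounded unitVolume 1 (g i))
    (hg₀ : AEBounded unitVolume 1 g₀)
    (hVs : ∀ i, Integrable (Function.uncurry (Vs i)) (unitVolume.prod unitVolume))
    (hV : Integrable (Function.uncurry V) (unitVolume.prod unitVolume))
    (hcut : Tendsto (fun i => cutNorm (fun x y => Vs i x y - V x y)) l (𝓝 0)) :
    Tendsto (fun i => kernelForm unitVolume unitVolume (Vs i) (f i) (g i)) l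
      (𝓝 (kernelForm unitVolume unitVolume V f₀ g₀)) := by
  have error_tendsto : Tendsto (fun i => kernelForm unitVolume unitVolume (Vs i) (f i) (g i)
      - kernelForm unitVolume unitVolume V (f i) (g i)) l (𝓝 0) := by
    refine squeeze_zero_norm (fun i => ?_) hcut
    rw [← kernelForm_sub (hf i) (hg i) (hVs i) hV]
    exact abs_kernelForm_le_cutNorm (hf i) (hg i) ((hVs i).sub hV)
  simpa only [sub_add_cancel, zero_add] using
    error_tendsto.add (hff₀.tendsto_kernelForm hgg₀ hf hg hg₀ hV)

end CutNorm

section YoungMeasure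

lemma integral_quadratic {P : Measure ℝ} [IsProbabilityMeasure P] (hP : MemLp (fun t => t) 2 P)
    (b c : ℝ) : ∫ t, (t ^ 2 + b * t + c) ∂P = ∫ t, t ^ 2 ∂P + b * ∫ t, t ∂P + c := by
  have hlin : Integrable (fun t => b * t) P := (hP.integrable one_le_two).const_mul b
  have hquad : Integrable (fun t => t ^ 2 + b * t) P := hP.integrable_sq.add hlin
  rw [integral_add hquad (integrable_const c), integral_add hP.integrable_sq hlin,
    integral_const_mul, integral_const, probReal_univ, one_smul]

lemma integral_integral_sq_abs_sub {P Q : Measure ℝ} [IsProbabilityMeasure P]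
    [IsProbabilityMeasure Q] (hP : MemLp (fun t => t) 2 P) (hQ : MemLp (fun t => t) 2 Q) :
    ∫ t, ∫ s, |s - t| ^ 2 ∂P ∂Q
      = ∫ s, s ^ 2 ∂P - 2 * ((∫ s, s ∂P) * ∫ t, t ∂Q) + ∫ t, t ^ 2 ∂Q := by
  have inner_eq (t : ℝ) : ∫ s, |s - t| ^ 2 ∂P
      = t ^ 2 + -2 * (∫ s, s ∂P) * t + ∫ s, s ^ 2 ∂P := by
    have expand (s : ℝ) : |s - t| ^ 2 = s ^ 2 + -2 * t * s + t ^ 2 := by rw [sq_abs]; ring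
    simp only [expand, integral_quadratic hP]
    ring
  simp only [inner_eq, integral_quadratic hQ]
  ring

/-- The function `x ↦ ∫ f dν_x` averaging an observable `f` over the fibres of a Young measure;
for `f = (· ^ p)` this is the `p`-th moment function. -/
def fiberMean (ν : ℝ → Measure ℝ) (f : ℝ → ℝ) (x : ℝ) : ℝ := ∫ t, f t ∂(ν x)

lemma fiberMean_deltaYM (u : ℝ → ℝ) (f : ℝ → ℝ) : fiberMean (deltaYM u) f = f ∘ u :=
  funext fun x => integral_dirac f (u x)

namespace IsYoungMeasure

variable {ν : ℝ → Measure ℝ}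

/-- A Young measure as a bundled Markov kernel. -/
def kernel (hν : IsYoungMeasure ν) : Kernel ℝ ℝ := ⟨ν, hν.1⟩

instance (hν : IsYoungMeasure ν) : IsMarkovKernel hν.kernel := ⟨hν.2⟩

lemma stronglyMeasurable_fiberMean (hν : IsYoungMeasure ν) {f : ℝ → ℝ} (hf : Measurable f) :
    StronglyMeasurable (fiberMean ν f) :=
  hf.stronglyMeasurable.integral_kernel (κ := hν.kernel)

end IsYoungMeasure

lemma integrable_of_ae_mem_Icc {E : Type*} [NormedAddCommGroup E] {P : Measure ℝ}
    [IsFiniteMeasure P] {f : ℝ → E} (hf : Continuous f) {a b : ℝ}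
    (hP : ∀ᵐ t ∂P, t ∈ Set.Icc a b) : Integrable f P := by
  rw [← Measure.restrict_eq_self_of_ae_mem hP]
  exact hf.continuousOn.integrableOn_compact isCompact_Icc

namespace YMb

variable {f g : ℝ → ℝ} {C : ℝ}

instance (ν : YMb) (x : ℝ) : IsProbabilityMeasure (ν.1 x) := ν.2.1.2 x

lemma ae_ae_mem_Icc (ν : YMb) : ∀ᵐ x ∂unitVolume, ∀ᵐ t ∂(ν.1 x), t ∈ Set.Icc (-1 : ℝ) 1 :=
  ν.2.2.mono fun _ hx => (mem_ae_iff_prob_eq_one measurableSet_Icc).2 hx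

lemma ae_integrable (ν : YMb) (hf : Continuous f) : ∀ᵐ x ∂unitVolume, Integrable f (ν.1 x) :=
  ν.ae_ae_mem_Icc.mono fun _ hx => integrable_of_ae_mem_Icc hf hx

lemma ae_memLp_id (ν : YMb) : ∀ᵐ x ∂unitVolume, MemLp (fun t => t) 2 (ν.1 x) := by
  filter_upwards [ν.ae_ae_mem_Icc] with x hx
  exact .of_bound measurable_id.aestronglyMeasurable 1 (hx.mono fun t => abs_le.2)

lemma fiberMean_ae_congr (ν : YMb) (hfg : Set.EqOn f g (Set.Icc (-1) 1)) :
    fiberMean ν.1 f =ᵐ[unitVolume] fiberMean ν.1 g :=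
  ν.ae_ae_mem_Icc.mono fun _ hx => integral_congr_ae (hx.mono hfg)

lemma aeBounded_fiberMean (ν : YMb) (hf : Measurable f) (hC : ∀ t ∈ Set.Icc (-1) 1, |f t| ≤ C) :
    AEBounded unitVolume C (fiberMean ν.1 f) where
  aestronglyMeasurable := (ν.2.1.stronglyMeasurable_fiberMean hf).aestronglyMeasurable
  ae_abs_le := ν.ae_ae_mem_Icc.mono fun x hx => by
    simpa [fiberMean] using norm_integral_le_of_norm_le_const (f := f) (hx.mono hC)

lemma aeBounded_fiberMean_pow (ν : YMb) (p : ℕ) :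
    AEBounded unitVolume 1 (fiberMean ν.1 (· ^ p)) :=
  ν.aeBounded_fiberMean (measurable_id.pow_const p) fun t ht => by
    rw [abs_pow]
    exact pow_le_one₀ (abs_nonneg t) (abs_le.2 ht)

lemma aeBounded_fiberMean_sub (ν : YMb) (hf : Continuous f) (hg : Continuous g)
    (hC : ∀ t ∈ Set.Icc (-1) 1, |f t - g t| ≤ C) :
    AEBounded unitVolume C (fun x => fiberMean ν.1 f x - fiberMean ν.1 g x) where
  aestronglyMeasurable := ((ν.2.1.stronglyMeasurable_fiberMean hf.measurable).sub
    (ν.2.1.stronglyMeasurable_fiberMean hg.measurable)).aestronglyMeasurable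
  ae_abs_le := by
    filter_upwards [(ν.aeBounded_fiberMean (hf.sub hg).measurable hC).ae_abs_le,
      ν.ae_integrable hf, ν.ae_integrable hg] with x hx hfx hgx
    rwa [fiberMean, fiberMean, ← integral_sub hfx hgx]

lemma fiberMean_polynomial (ν : YMb) (q : Polynomial ℝ) :
    (fun x => ∑ p ∈ Finset.range (q.natDegree + 1), q.coeff p * fiberMean ν.1 (· ^ p) x)
      =ᵐ[unitVolume] fiberMean ν.1 (fun t => q.eval t) := by
  have hint := ae_all_iff.2 fun p : ℕ => ν.ae_integrable (continuous_pow p)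
  filter_upwards [hint] with x hx
  simp only [fiberMean, Polynomial.eval_eq_sum_range, ← integral_const_mul]
  exact (integral_finsetSum _ fun p _ => (hx p).const_mul (q.coeff p)).symm

end YMb

lemma NarrowConv.tendstoWeakStar_fiberMean {νs : ℕ → YMb} {ν : YMb}
    (h : NarrowConv (fun n => (νs n).1) ν.1) {f : ℝ → ℝ} (hf : Continuous f) :
    TendstoWeakStar unitVolume (fun n => fiberMean (νs n).1 f) atTop (fiberMean ν.1 f) := by
  have hI : (-1 : ℝ) ≤ 1 := by norm_num
  let F : ℝ → ℝ := fun t => f (Set.projIcc (-1) 1 hI t)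
  have hF : Continuous F := hf.comp (continuous_subtype_val.comp continuous_projIcc)
  have F_bounded : ∃ C, ∀ s, |F s| ≤ C := by
    obtain ⟨C, hC⟩ := isCompact_Icc.exists_bound_of_continuousOn (s := Set.Icc (-1 : ℝ) 1)
      hf.continuousOn
    exact ⟨C, fun s => hC _ (Subtype.coe_prop _)⟩
  have F_eqOn : Set.EqOn F f (Set.Icc (-1) 1) := fun t ht => by
    simp only [F, Set.projIcc_of_mem hI ht]
  have F_tendsto : TendstoWeakStar unitVolume (fun n => fiberMean (νs n).1 F) atTop
      (fiberMean ν.1 F) := h F hF F_bounded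
  exact F_tendsto.congr_ae (fun n => (νs n).fiberMean_ae_congr F_eqOn)
    (ν.fiberMean_ae_congr F_eqOn)

lemma narrowConv_of_tendstoWeakStar_fiberMean_pow {νs : ℕ → YMb} {ν : YMb}
    (h : ∀ p : ℕ, TendstoWeakStar unitVolume (fun n => fiberMean (νs n).1 (· ^ p)) atTop
      (fiberMean ν.1 (· ^ p))) : NarrowConv (fun n => (νs n).1) ν.1 := by
  rintro f hf ⟨C, hC⟩
  refine TendstoWeakStar.of_forall_approx
    (fun n => (νs n).aeBounded_fiberMean hf.measurable fun t _ => hC t)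
    (ν.aeBounded_fiberMean hf.measurable fun t _ => hC t) fun ε hε => ?_
  obtain ⟨q, hq⟩ := exists_polynomial_near_of_continuousOn (-1) 1 f hf.continuousOn ε hε
  have hfq : ∀ t ∈ Set.Icc (-1 : ℝ) 1, |f t - q.eval t| ≤ ε := fun t ht => by
    rw [abs_sub_comm]
    exact (hq t ht).le
  refine ⟨fun n => fiberMean (νs n).1 (fun t => q.eval t), fiberMean ν.1 (fun t => q.eval t), ?_,
    fun n => (νs n).aeBounded_fiberMean_sub hf q.continuous hfq,
    ν.aeBounded_fiberMean_sub hf q.continuous hfq⟩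
  exact (TendstoWeakStar.sum_const_mul _ q.coeff (fun p n => (νs n).aeBounded_fiberMean_pow p)
    ν.aeBounded_fiberMean_pow h).congr_ae (fun n => (νs n).fiberMean_polynomial q)
    (ν.fiberMean_polynomial q)

end YoungMeasure

section GinzburgLandau

variable {V : ℝ → ℝ → ℝ}

lemma graphonDirichlet_eq_kernelForm
    (hV : Integrable (Function.uncurry V) (unitVolume.prod unitVolume)) (ν : YMb) :
    graphonDirichlet V ν.1
      = kernelForm unitVolume unitVolume V (fiberMean ν.1 (· ^ 2)) (fun _ => 1)
        - 2 * kernelForm unitVolume unitVolume V (fiberMean ν.1 (· ^ 1)) (fiberMean ν.1 (· ^ 1))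
        + kernelForm unitVolume unitVolume V (fun _ => 1) (fiberMean ν.1 (· ^ 2)) := by
  have m₁ := ν.aeBounded_fiberMean_pow 1
  have m₂ := ν.aeBounded_fiberMean_pow 2
  have int₂₀ := m₂.integrable_kernel_mul .one hV
  have int₁₁ := (m₁.integrable_kernel_mul m₁ hV).const_mul 2
  have int₀₂ := AEBounded.one.integrable_kernel_mul m₂ hV
  rw [kernelForm_eq_integral_prod m₂ .one hV, kernelForm_eq_integral_prod m₁ m₁ hV,
    kernelForm_eq_integral_prod .one m₂ hV, ← integral_const_mul, ← integral_sub' int₂₀ int₁₁,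
    ← integral_add' (int₂₀.sub int₁₁) int₀₂, integral_prod _ ((int₂₀.sub int₁₁).add int₀₂)]
  refine integral_congr_ae (ν.ae_memLp_id.mono fun x hx => ?_)
  refine integral_congr_ae (ν.ae_memLp_id.mono fun y hy => ?_)
  simp only [integral_integral_sq_abs_sub hx hy, Pi.add_apply, Pi.sub_apply, fiberMean, pow_one]
  ring

lemma continuous_Phi : Continuous Phi := by
  unfold Phi
  fun_prop

lemma NarrowConv.tendsto_graphonGL {ε : ℝ} {Vs : ℕ → ℝ → ℝ → ℝ} {νs : ℕ → YMb} {ν : YMb}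
    (h : NarrowConv (fun n => (νs n).1) ν.1)
    (hVs : ∀ n, Integrable (Function.uncurry (Vs n)) (unitVolume.prod unitVolume))
    (hV : Integrable (Function.uncurry V) (unitVolume.prod unitVolume))
    (hcut : Tendsto (fun n => cutNorm (fun x y => Vs n x y - V x y)) atTop (𝓝 0)) :
    Tendsto (fun n => graphonGL (Vs n) ε (νs n).1) atTop (𝓝 (graphonGL V ε ν.1)) := by
  have hm (p : ℕ) := h.tendstoWeakStar_fiberMean (continuous_pow p)
  have hmBd (p n : ℕ) := (νs n).aeBounded_fiberMean_pow p
  have one (_ : ℕ) : AEBounded unitVolume 1 (fun _ => (1 : ℝ)) := .one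
  have dirichlet_tendsto : Tendsto (fun n => graphonDirichlet (Vs n) (νs n).1) atTop
      (𝓝 (graphonDirichlet V ν.1)) := by
    simp only [graphonDirichlet_eq_kernelForm (hVs _), graphonDirichlet_eq_kernelForm hV]
    have T₂₀ := (hm 2).tendsto_kernelForm_of_cutNorm .const (hmBd 2) one .one hVs hV hcut
    have T₁₁ := (hm 1).tendsto_kernelForm_of_cutNorm (hm 1) (hmBd 1) (hmBd 1)
      (ν.aeBounded_fiberMean_pow 1) hVs hV hcut
    have T₀₂ := TendstoWeakStar.const.tendsto_kernelForm_of_cutNorm (hm 2) one (hmBd 2)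
      (ν.aeBounded_fiberMean_pow 2) hVs hV hcut
    exact (T₂₀.sub (T₁₁.const_mul 2)).add T₀₂
  have potential_tendsto : Tendsto (fun n => ∫ x in I01, ∫ t, Phi t ∂((νs n).1 x)) atTop
      (𝓝 (∫ x in I01, ∫ t, Phi t ∂(ν.1 x))) := by
    simpa only [one_mul, fiberMean] using
      h.tendstoWeakStar_fiberMean continuous_Phi (fun _ => 1) (integrable_const 1)
  exact dirichlet_tendsto.add (potential_tendsto.const_mul (1 / ε))

end GinzburgLandau

section Sampling

variable {E Ω : Type*} [NormedAddCommGroup E] [InnerProductSpace ℝ E] [MeasurableSpace Ω]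

lemma exists_seq_norm_sum_sq_le {X : ℕ → Set E} {r : ℝ}
    (h : ∀ i v, ∃ x ∈ X i, ‖x‖ ≤ r ∧ inner ℝ v x ≤ 0) :
    ∃ x : ℕ → E, (∀ i, x i ∈ X i) ∧ ∀ k, ‖∑ i ∈ Finset.range k, x i‖ ^ 2 ≤ k * r ^ 2 := by
  choose step step_mem norm_step_le inner_step_nonpos using h
  -- Greedy choice: each step makes an obtuse angle with the partial sum already accumulated.
  let S : ℕ → E := Nat.rec 0 fun i v => v + step i v
  have S_eq_sum (k : ℕ) : S k = ∑ i ∈ Finset.range k, step i (S i) := by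
    induction k with
    | zero => rfl
    | succ k ih => rw [Finset.sum_range_succ, ← ih]
  refine ⟨fun i => step i (S i), fun i => step_mem i _, fun k => ?_⟩
  rw [← S_eq_sum]
  induction k with
  | zero => simp [S]
  | succ k ih =>
    have hsq : ‖step k (S k)‖ ^ 2 ≤ r ^ 2 := by gcongr; exact norm_step_le k (S k)
    calc ‖S (k + 1)‖ ^ 2
        = ‖S k‖ ^ 2 + 2 * inner ℝ (S k) (step k (S k)) + ‖step k (S k)‖ ^ 2 :=
          norm_add_sq_real _ _
      _ ≤ (k + 1 : ℕ) * r ^ 2 := by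
          push_cast
          linarith [inner_step_nonpos k (S k)]

lemma exists_mem_inner_sub_integral_nonpos [CompleteSpace E] {P : Measure Ω}
    [IsProbabilityMeasure P] {φ : Ω → E} (hφ : Integrable φ P) {S : Set Ω} (hS : ∀ᵐ ω ∂P, ω ∈ S)
    (v : E) : ∃ s ∈ S, inner ℝ v (φ s - ∫ ω, φ ω ∂P) ≤ 0 := by
  obtain ⟨s, hs, hle⟩ := exists_notMem_null_le_integral (hφ.const_inner v) hS
  refine ⟨s, not_not.1 hs, ?_⟩
  rw [inner_sub_right, sub_nonpos, ← integral_inner hφ]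
  exact hle

lemma exists_seq_norm_sum_sub_integral_sq_le [CompleteSpace E] {P : ℕ → Measure Ω}
    [∀ i, IsProbabilityMeasure (P i)] {φ : Ω → E} (hφ : ∀ i, Integrable φ (P i)) {S : Set Ω}
    (hS : ∀ i, ∀ᵐ ω ∂(P i), ω ∈ S) {R : ℝ} (hR : ∀ s ∈ S, ‖φ s‖ ≤ R) :
    ∃ s : ℕ → Ω, (∀ i, s i ∈ S) ∧
      ∀ k, ‖∑ i ∈ Finset.range k, (φ (s i) - ∫ ω, φ ω ∂(P i))‖ ^ 2 ≤ k * (R + R) ^ 2 := by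
  have norm_integral_le (i : ℕ) : ‖∫ ω, φ ω ∂(P i)‖ ≤ R := by
    simpa using norm_integral_le_of_norm_le_const ((hS i).mono hR)
  obtain ⟨x, hx, hsum⟩ := exists_seq_norm_sum_sq_le (r := R + R)
    (X := fun i => (fun s => φ s - ∫ ω, φ ω ∂(P i)) '' S) fun i v => by
      obtain ⟨s, hs, hle⟩ := exists_mem_inner_sub_integral_nonpos (hφ i) (hS i) v
      exact ⟨_, ⟨s, hs, rfl⟩, (norm_sub_le _ _).trans
        (add_le_add (hR s hs) (norm_integral_le i)), hle⟩
  choose s hs hsx using hx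
  exact ⟨s, hs, by simpa only [hsx] using hsum⟩

/-- The vector `(1, s/2, (s/2)², …, (s/2)^(N-1))`. The geometric weights keep its norm bounded
on `[-1, 1]` independently of `N`. -/
def momentVector (N : ℕ) (s : ℝ) : EuclideanSpace ℝ (Fin N) :=
  WithLp.toLp 2 fun p => (s / 2) ^ (p : ℕ)

lemma momentVector_apply {N : ℕ} (s : ℝ) (p : Fin N) :
    momentVector N s p = s ^ (p : ℕ) / 2 ^ (p : ℕ) := div_pow _ _ _

lemma continuous_momentVector (N : ℕ) : Continuous (momentVector N) :=
  (PiLp.continuous_toLp 2 _).comp (by fun_prop)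

lemma norm_momentVector_le (N : ℕ) {s : ℝ} (hs : s ∈ Set.Icc (-1) 1) :
    ‖momentVector N s‖ ≤ √2 := by
  refine (EuclideanSpace.norm_eq _).trans_le (Real.sqrt_le_sqrt ?_)
  have term_le (p : ℕ) : ‖(s / 2) ^ p‖ ^ 2 ≤ (1 / 2) ^ p := by
    rw [Real.norm_eq_abs, sq_abs, ← pow_mul, mul_comm, pow_mul]
    exact pow_le_pow_left₀ (sq_nonneg _) (by nlinarith [hs.1, hs.2]) p
  calc ∑ p : Fin N, ‖(s / 2) ^ (p : ℕ)‖ ^ 2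
      = ∑ p ∈ Finset.range N, ‖(s / 2) ^ p‖ ^ 2 :=
        Fin.sum_univ_eq_sum_range (fun p => ‖(s / 2) ^ p‖ ^ 2) N
    _ ≤ ∑ p ∈ Finset.range N, (1 / 2 : ℝ) ^ p := Finset.sum_le_sum fun p _ => term_le p
    _ ≤ 2 := sum_geometric_two_le N

lemma integral_momentVector_apply {N : ℕ} {P : Measure ℝ} (hP : Integrable (momentVector N) P)
    (p : Fin N) : (∫ t, momentVector N t ∂P) p = (∫ t, t ^ (p : ℕ) ∂P) / 2 ^ (p : ℕ) := by
  rw [← integral_div]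
  simpa only [PiLp.proj_apply, momentVector_apply] using
    ((EuclideanSpace.proj (𝕜 := ℝ) p).integral_comp_comm hP).symm

lemma exists_seq_abs_sum_pow_sub_integral_le {P : ℕ → Measure ℝ} [∀ i, IsProbabilityMeasure (P i)]
    (hP : ∀ i, ∀ᵐ t ∂(P i), t ∈ Set.Icc (-1 : ℝ) 1) (N : ℕ) :
    ∃ s : ℕ → ℝ, (∀ i, s i ∈ Set.Icc (-1 : ℝ) 1) ∧ ∀ p < N, ∀ k,
      |∑ i ∈ Finset.range k, (s i ^ p - ∫ t, t ^ p ∂(P i))| ≤ 2 ^ p * √(8 * k) := by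
  have hint (i : ℕ) := integrable_of_ae_mem_Icc (continuous_momentVector N) (hP i)
  obtain ⟨s, hs, hsum⟩ := exists_seq_norm_sum_sub_integral_sq_le hint hP
    fun s hs => norm_momentVector_le N hs
  refine ⟨s, hs, fun p hp k => ?_⟩
  set error := ∑ i ∈ Finset.range k, (momentVector N (s i) - ∫ t, momentVector N t ∂(P i))
  have sum_eq : ∑ i ∈ Finset.range k, (s i ^ p - ∫ t, t ^ p ∂(P i)) = 2 ^ p * error ⟨p, hp⟩ := by
    simp only [error, WithLp.ofLp_sum, Finset.sum_apply, PiLp.sub_apply,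
      integral_momentVector_apply (hint _), momentVector_apply, Finset.mul_sum]
    field_simp
  have norm_error_le : ‖error‖ ≤ √(8 * k) := by
    refine Real.le_sqrt_of_sq_le ((hsum k).trans_eq ?_)
    rw [← two_mul, mul_pow, Real.sq_sqrt zero_le_two]
    ring
  rw [sum_eq, abs_mul, abs_of_pos (by positivity)]
  gcongr
  exact (PiLp.norm_apply_le error ⟨p, hp⟩).trans norm_error_le

end Sampling

section StepFunction

/-- The cell `(i/n, (i+1)/n]`, indexed from `0` as in `stepIdx`. -/
def stepCell (n i : ℕ) : Set ℝ := Set.Ioc ((i : ℝ) / n) (((i : ℝ) + 1) / n)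

variable {n i : ℕ}

lemma stepIdx_of_mem_stepCell {x : ℝ} (hx : x ∈ stepCell n i) : stepIdx n x = i := by
  have hn : (0 : ℝ) < n := by
    refine lt_of_le_of_ne (Nat.cast_nonneg n) fun h => ?_
    simp [stepCell, ← h] at hx
  have hceil : ⌈(n : ℝ) * x⌉₊ = i + 1 := by
    rw [Nat.ceil_eq_iff (Nat.succ_ne_zero i), Nat.succ_sub_one, Nat.cast_succ, mul_comm]
    exact ⟨(div_lt_iff₀ hn).1 hx.1, (le_div_iff₀ hn).1 hx.2⟩
  rw [stepIdx, hceil, Nat.add_sub_cancel]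

lemma measurable_stepIdx (n : ℕ) : Measurable (stepIdx n) :=
  (Nat.measurable_ceil.comp (measurable_const_mul (n : ℝ))).sub_const 1

lemma isStepFun_comp_stepIdx (n : ℕ) (s : ℕ → ℝ) : IsStepFun n (fun x => s (stepIdx n x)) :=
  fun _ _ hx _ hy =>
    congrArg s ((stepIdx_of_mem_stepCell hx).trans (stepIdx_of_mem_stepCell hy).symm)

lemma volume_real_stepCell (n i : ℕ) : volume.real (stepCell n i) = (n : ℝ)⁻¹ := by
  rw [stepCell, Real.volume_real_Ioc_of_le (by gcongr; linarith)]
  ring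

lemma unitVolume_eq_restrict_Ioc : unitVolume = volume.restrict (Set.Ioc 0 1) :=
  Measure.restrict_congr_set Ioo_ae_eq_Ioc

lemma stepCell_subset_Ioc (hi : i < n) : stepCell n i ⊆ Set.Ioc 0 1 := by
  have hn : (0 : ℝ) < n := by exact_mod_cast (Nat.zero_le i).trans_lt hi
  refine Set.Ioc_subset_Ioc (by positivity) ((div_le_one hn).2 ?_)
  exact_mod_cast hi

lemma restrict_stepCell_le_unitVolume (hi : i < n) :
    volume.restrict (stepCell n i) ≤ unitVolume :=
  unitVolume_eq_restrict_Ioc ▸ Measure.restrict_mono_set volume (stepCell_subset_Ioc hi)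

lemma intervalIntegral_eq_sum_stepCell {a : ℝ → ℝ} (ha : Integrable a unitVolume) {k : ℕ}
    (hk : k ≤ n) :
    ∫ x in (0 : ℝ)..k / n, a x = ∑ i ∈ Finset.range k, ∫ x in stepCell n i, a x := by
  have cell_le (i : ℕ) : (i : ℝ) / n ≤ ((i + 1 : ℕ) : ℝ) / n := by gcongr; exact i.le_succ
  have cell_eq (i : ℕ) :
      ∫ x in stepCell n i, a x = ∫ x in (i : ℝ) / n..((i + 1 : ℕ) : ℝ) / n, a x := by
    rw [intervalIntegral.integral_of_le (cell_le i), stepCell, Nat.cast_succ]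
  have hint : ∀ i < k,
      IntervalIntegrable a volume ((i : ℝ) / n) (((i + 1 : ℕ) : ℝ) / n) := fun i hi => by
    rw [intervalIntegrable_iff_integrableOn_Ioc_of_le (cell_le i), Nat.cast_succ]
    exact ha.mono_measure (restrict_stepCell_le_unitVolume (hi.trans_le hk))
  simp only [cell_eq]
  rw [intervalIntegral.sum_integral_adjacent_intervals (a := fun i : ℕ => (i : ℝ) / n) hint,
    Nat.cast_zero, zero_div]

lemma intervalIntegrable_of_unitVolume {a : ℝ → ℝ} (ha : Integrable a unitVolume) {b c : ℝ}
    (hb : 0 ≤ b) (hbc : b ≤ c) (hc : c ≤ 1) : IntervalIntegrable a volume b c := by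
  rw [intervalIntegrable_iff_integrableOn_Ioc_of_le hbc]
  rw [unitVolume_eq_restrict_Ioc] at ha
  exact IntegrableOn.mono_set ha (Set.Ioc_subset_Ioc hb hc)

lemma AEBounded.abs_intervalIntegral_le {a : ℝ → ℝ} {C b c : ℝ} (ha : AEBounded unitVolume C a)
    (hb : 0 ≤ b) (hbc : b ≤ c) (hc : c ≤ 1) : |∫ x in b..c, a x| ≤ C * (c - b) := by
  rw [← abs_of_nonneg (sub_nonneg.2 hbc), ← Real.norm_eq_abs]
  refine intervalIntegral.norm_integral_le_of_norm_le_const_ae ?_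
  have hae := ha.ae_abs_le
  rw [unitVolume_eq_restrict_Ioc, ae_restrict_iff' measurableSet_Ioc] at hae
  filter_upwards [hae] with x hx hxbc
  rw [Set.uIoc_of_le hbc] at hxbc
  exact hx (Set.Ioc_subset_Ioc hb hc hxbc)

lemma abs_intervalIntegral_le_of_grid {a : ℝ → ℝ} {C D : ℝ} (ha : AEBounded unitVolume C a)
    (hC : 0 ≤ C) (hn : n ≠ 0) (hgrid : ∀ k ≤ n, |∫ x in (0 : ℝ)..k / n, a x| ≤ D) {t : ℝ}
    (ht : t ∈ Set.Icc 0 1) : |∫ x in (0 : ℝ)..t, a x| ≤ D + C / n := by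
  have hn' : (0 : ℝ) < n := by positivity
  set k := ⌊(n : ℝ) * t⌋₊
  have hk : k ≤ n := Nat.floor_le_of_le (mul_le_of_le_one_right hn'.le ht.2)
  have grid_nonneg : 0 ≤ (k : ℝ) / n := by positivity
  have grid_le : (k : ℝ) / n ≤ t :=
    (div_le_iff₀ hn').2 (mul_comm t n ▸ Nat.floor_le (mul_nonneg hn'.le ht.1))
  have sub_grid_le : t - k / n ≤ 1 / n := by
    have := Nat.lt_floor_add_one ((n : ℝ) * t)
    rw [sub_le_iff_le_add, ← add_div, le_div_iff₀ hn']
    linarith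
  rw [← intervalIntegral.integral_add_adjacent_intervals
    (intervalIntegrable_of_unitVolume ha.integrable le_rfl grid_nonneg (grid_le.trans ht.2))
    (intervalIntegrable_of_unitVolume ha.integrable grid_nonneg grid_le ht.2)]
  refine (abs_add_le _ _).trans (add_le_add (hgrid k hk) ?_)
  rw [← mul_one_div C]
  exact (ha.abs_intervalIntegral_le grid_nonneg grid_le ht.2).trans
    (mul_le_mul_of_nonneg_left sub_grid_le hC)

end StepFunction

section RecoverySequence

namespace YMb

variable (ν : YMb) {n i : ℕ}

/-- The average `n ∫_{i/n}^{(i+1)/n} ν_x dx` of the fibres of a Young measure over a cell. -/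
def cellAverage (n i : ℕ) : Measure ℝ := ν.2.1.kernel ∘ₘ volume[|stepCell n i]

lemma isProbabilityMeasure_cellAverage (hn : n ≠ 0) :
    IsProbabilityMeasure (ν.cellAverage n i) := by
  have hcell : volume (stepCell n i) ≠ 0 := fun h => by
    have hreal := volume_real_stepCell n i
    rw [Measure.real, h, ENNReal.toReal_zero] at hreal
    exact (by positivity : (n : ℝ)⁻¹ ≠ 0) hreal.symm
  have := cond_isProbabilityMeasure_of_finite hcell measure_Ioc_lt_top.ne
  unfold cellAverage
  infer_instance

lemma ae_mem_Icc_cellAverage (hi : i < n) :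
    ∀ᵐ t ∂(ν.cellAverage n i), t ∈ Set.Icc (-1 : ℝ) 1 := by
  refine Measure.ae_comp_of_ae_ae measurableSet_Icc ?_
  have hac : volume[|stepCell n i] ≪ unitVolume :=
    Measure.absolutelyContinuous_of_le_smul (c := (volume (stepCell n i))⁻¹) (by
      rw [ProbabilityTheory.cond]
      gcongr
      exact restrict_stepCell_le_unitVolume hi)
  exact hac.ae_le ν.ae_ae_mem_Icc

lemma integral_cellAverage (hi : i < n) {f : ℝ → ℝ} (hf : Continuous f) :
    ∫ t, f t ∂(ν.cellAverage n i) = n * ∫ x in stepCell n i, fiberMean ν.1 f x := by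
  have hint : Integrable f (ν.cellAverage n i) := by
    have := ν.isProbabilityMeasure_cellAverage (i := i) (Nat.ne_zero_of_lt hi)
    exact integrable_of_ae_mem_Icc hf (ν.ae_mem_Icc_cellAverage hi)
  have volume_inv : (volume (stepCell n i))⁻¹.toReal = n := by
    rw [ENNReal.toReal_inv, ← Measure.real, volume_real_stepCell, inv_inv]
  rw [cellAverage, Measure.comp_eq_comp_const_apply] at hint ⊢
  rw [Kernel.integral_comp hint, Kernel.const_apply, ProbabilityTheory.cond, integral_smul_measure,
    volume_inv]
  rfl

lemma setIntegral_stepCell_pow_sub_fiberMean (hi : i < n) (s : ℕ → ℝ) (p : ℕ) :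
    ∫ x in stepCell n i, (s (stepIdx n x) ^ p - fiberMean ν.1 (· ^ p) x)
      = (n : ℝ)⁻¹ * (s i ^ p - ∫ t, t ^ p ∂(ν.cellAverage n i)) := by
  have hn : (n : ℝ) ≠ 0 := by exact_mod_cast Nat.ne_zero_of_lt hi
  have hmoment : IntegrableOn (fiberMean ν.1 (· ^ p)) (stepCell n i) :=
    (ν.aeBounded_fiberMean_pow p).integrable.mono_measure (restrict_stepCell_le_unitVolume hi)
  calc ∫ x in stepCell n i, (s (stepIdx n x) ^ p - fiberMean ν.1 (· ^ p) x)
      = ∫ x in stepCell n i, (s i ^ p - fiberMean ν.1 (· ^ p) x) :=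
        setIntegral_congr_fun measurableSet_Ioc fun x hx => by
          simp only [stepIdx_of_mem_stepCell hx]
    _ = (n : ℝ)⁻¹ * s i ^ p - ∫ x in stepCell n i, fiberMean ν.1 (· ^ p) x := by
        have hconst : IntegrableOn (fun _ => s i ^ p) (stepCell n i) :=
          integrableOn_const measure_Ioc_lt_top.ne
        rw [integral_sub hconst hmoment, setIntegral_const, volume_real_stepCell, smul_eq_mul]
    _ = (n : ℝ)⁻¹ * (s i ^ p - ∫ t, t ^ p ∂(ν.cellAverage n i)) := by
        rw [ν.integral_cellAverage hi (continuous_pow p), mul_sub, inv_mul_cancel_left₀ hn]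

lemma aeBounded_pow_sub_fiberMean {u : ℝ → ℝ} (hu : Measurable u)
    (huI : ∀ x, u x ∈ Set.Icc (-1) 1) (p : ℕ) :
    AEBounded unitVolume 2 (fun x => u x ^ p - fiberMean ν.1 (· ^ p) x) := by
  have hup : AEBounded unitVolume 1 (fun x => u x ^ p) := .of_forall (hu.pow_const p) fun x => by
    rw [abs_pow]
    exact pow_le_one₀ (abs_nonneg _) (abs_le.2 (huI x))
  exact one_add_one_eq_two (R := ℝ) ▸ hup.sub (ν.aeBounded_fiberMean_pow p)

lemma exists_seq_abs_integral_grid_le (hn : n ≠ 0) (N : ℕ) :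
    ∃ s : ℕ → ℝ, (∀ i, s i ∈ Set.Icc (-1 : ℝ) 1) ∧ ∀ p < N, ∀ k ≤ n,
      |∫ x in (0 : ℝ)..k / n, (s (stepIdx n x) ^ p - fiberMean ν.1 (· ^ p) x)|
        ≤ 2 ^ p * √(8 / n) := by
  have hn' : (0 : ℝ) < n := by positivity
  -- Repeating the last cell turns the `n` cell averages into an infinite sequence.
  have last_lt (i : ℕ) : min i (n - 1) < n := by omega
  have := fun i : ℕ => ν.isProbabilityMeasure_cellAverage (i := min i (n - 1)) hn
  obtain ⟨s, hs, hsum⟩ := exists_seq_abs_sum_pow_sub_integral_le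
    (fun i => ν.ae_mem_Icc_cellAverage (last_lt i)) N
  refine ⟨s, hs, fun p hp k hk => ?_⟩
  have hbd := ν.aeBounded_pow_sub_fiberMean (u := fun x => s (stepIdx n x))
    ((measurable_of_countable s).comp (measurable_stepIdx n)) (fun x => hs (stepIdx n x)) p
  have integral_eq : ∫ x in (0 : ℝ)..k / n, (s (stepIdx n x) ^ p - fiberMean ν.1 (· ^ p) x)
      = (n : ℝ)⁻¹ * ∑ i ∈ Finset.range k,
          (s i ^ p - ∫ t, t ^ p ∂(ν.cellAverage n (min i (n - 1)))) := by
    rw [intervalIntegral_eq_sum_stepCell hbd.integrable hk, Finset.mul_sum]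
    refine Finset.sum_congr rfl fun i hi => ?_
    have hi : i < n := (Finset.mem_range.1 hi).trans_le hk
    rw [ν.setIntegral_stepCell_pow_sub_fiberMean hi, min_eq_left (Nat.le_sub_one_of_lt hi)]
  rw [integral_eq, abs_mul, abs_of_pos (by positivity)]
  calc (n : ℝ)⁻¹ * |∑ i ∈ Finset.range k,
          (s i ^ p - ∫ t, t ^ p ∂(ν.cellAverage n (min i (n - 1))))|
      ≤ (n : ℝ)⁻¹ * (2 ^ p * √(8 * n)) := by
        gcongr
        exact (hsum p hp k).trans (by gcongr)
    _ = 2 ^ p * √(8 / n) := by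
        have hdiv : (8 : ℝ) / n = 8 * n / n ^ 2 := by field_simp
        rw [hdiv, Real.sqrt_div' _ (sq_nonneg _), Real.sqrt_sq hn'.le]
        ring

lemma exists_isStepFun_abs_intervalIntegral_le (n : ℕ) :
    ∃ u : ℝ → ℝ, IsStepFun n u ∧ Measurable u ∧ (∀ x, u x ∈ Set.Icc (-1 : ℝ) 1) ∧
      ∀ p < n, ∀ t ∈ Set.Icc (0 : ℝ) 1,
        |∫ x in (0 : ℝ)..t, (u x ^ p - fiberMean ν.1 (· ^ p) x)|
          ≤ 2 ^ p * √(8 / n) + 2 / n := by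
  rcases eq_or_ne n 0 with rfl | hn
  · exact ⟨fun _ => 0, fun i => i.elim0, measurable_const, fun _ => by simp, by simp⟩
  obtain ⟨s, hs, hgrid⟩ := ν.exists_seq_abs_integral_grid_le hn n
  have hu : Measurable fun x => s (stepIdx n x) :=
    (measurable_of_countable s).comp (measurable_stepIdx n)
  exact ⟨fun x => s (stepIdx n x), isStepFun_comp_stepIdx n s, hu, fun x => hs _,
    fun p hp t ht => abs_intervalIntegral_le_of_grid
      (ν.aeBounded_pow_sub_fiberMean hu (fun x => hs _) p) (by norm_num) hn (hgrid p hp) ht⟩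

end YMb

lemma setIntegral_Iic_unitVolume (a : ℝ → ℝ) (t : ℝ) :
    ∫ x in Set.Iic t, a x ∂unitVolume = ∫ x in (0 : ℝ)..max 0 (min 1 t), a x := by
  rw [intervalIntegral.integral_of_le (le_max_left _ _), unitVolume_eq_restrict_Ioc,
    Measure.restrict_restrict measurableSet_Iic, Set.inter_comm, Set.Ioc_inter_Iic]
  rcases le_total 0 (min 1 t) with h | h
  · rw [max_eq_right h]
  · rw [max_eq_left h, Set.Ioc_self, Set.Ioc_eq_empty_of_le h]

lemma tendstoWeakStar_of_intervalIntegral {ι : Type*} {l : Filter ι}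
    {C : ℝ≥0} {f : ι → ℝ → ℝ} {f₀ : ℝ → ℝ} (hf : ∀ i, AEBounded unitVolume C (f i))
    (hf₀ : AEBounded unitVolume C f₀)
    (h : ∀ t ∈ Set.Icc (0 : ℝ) 1,
      Tendsto (fun i => ∫ x in (0 : ℝ)..t, f i x) l (𝓝 (∫ x in (0 : ℝ)..t, f₀ x))) :
    TendstoWeakStar unitVolume f l f₀ := by
  refine .of_setIntegral hf hf₀ fun s hs => tendsto_setIntegral_of_Iic hf hf₀ ?_ (fun t => ?_) hs
  · simpa only [intervalIntegral.integral_of_le zero_le_one, ← unitVolume_eq_restrict_Ioc] using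
      h 1 (Set.right_mem_Icc.2 zero_le_one)
  · simpa only [setIntegral_Iic_unitVolume] using
      h _ ⟨le_max_left _ _, max_le zero_le_one (min_le_left _ _)⟩

/-- The Young measure `δ_u` of a measurable function with values in `[-1, 1]`, as an element of
`YMb`. -/
def YMb.dirac (u : ℝ → ℝ) (hu : Measurable u) (huI : ∀ x, u x ∈ Set.Icc (-1 : ℝ) 1) : YMb :=
  ⟨deltaYM u, ⟨Measure.measurable_dirac.comp hu, fun _ => Measure.dirac.isProbabilityMeasure⟩,
    .of_forall fun x => by simp [deltaYM, huI x]⟩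

lemma YMb.exists_narrowConv_dirac (ν : YMb) :
    ∃ (u : ℕ → ℝ → ℝ) (hu : ∀ n, Measurable (u n)) (huI : ∀ n x, u n x ∈ Set.Icc (-1 : ℝ) 1),
      (∀ n, IsStepFun n (u n)) ∧
        NarrowConv (fun n => (YMb.dirac (u n) (hu n) (huI n)).1) ν.1 := by
  choose u hstep hu huI herror using ν.exists_isStepFun_abs_intervalIntegral_le
  refine ⟨u, hu, huI, hstep, narrowConv_of_tendstoWeakStar_fiberMean_pow fun p => ?_⟩
  have error_tendsto : Tendsto (fun n : ℕ => 2 ^ p * √(8 / n) + 2 / n) atTop (𝓝 (0 : ℝ)) := by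
    have hsqrt := (tendsto_const_div_atTop_nhds_zero_nat (8 : ℝ)).sqrt
    simpa using (hsqrt.const_mul (2 ^ p)).add (tendsto_const_div_atTop_nhds_zero_nat (2 : ℝ))
  have hbd (n : ℕ) := (YMb.dirac (u n) (hu n) (huI n)).aeBounded_fiberMean_pow p
  refine tendstoWeakStar_of_intervalIntegral (C := 1) hbd (ν.aeBounded_fiberMean_pow p)
    fun t ht => ?_
  refine tendsto_sub_nhds_zero_iff.1 (squeeze_zero_norm' ?_ error_tendsto)
  filter_upwards [eventually_gt_atTop p] with n hpn
  rw [← intervalIntegral.integral_sub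
    (intervalIntegrable_of_unitVolume (hbd n).integrable le_rfl ht.1 ht.2)
    (intervalIntegrable_of_unitVolume (ν.aeBounded_fiberMean_pow p).integrable le_rfl ht.1 ht.2)]
  simpa only [YMb.dirac, fiberMean_deltaYM, Function.comp_apply, Real.norm_eq_abs] using
    herror n p hpn t ht

end RecoverySequence

section GammaConvergence

lemma gammaConv_of_tendsto {X : Type*} {conv : (ℕ → X) → X → Prop} {F : ℕ → X → EReal}
    {G : ℕ → X → ℝ} {G₀ : X → ℝ} (hGF : ∀ n x, (G n x : EReal) ≤ F n x)
    (hG : ∀ xs x, conv xs x → Tendsto (fun n => G n (xs n)) atTop (𝓝 (G₀ x)))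
    (hrec : ∀ x, ∃ xs, conv xs x ∧ ∀ n, F n (xs n) = G n (xs n)) :
    GammaConv conv F (fun x => (G₀ x : EReal)) := by
  have coe_tendsto {xs : ℕ → X} {x : X} (h : conv xs x) :
      Tendsto (fun n => (G n (xs n) : EReal)) atTop (𝓝 (G₀ x : EReal)) :=
    (continuous_coe_real_ereal.tendsto _).comp (hG xs x h)
  refine ⟨fun xs x h => ?_, fun x => ?_⟩
  · refine (coe_tendsto h).liminf_eq.ge.trans ?_
    exact liminf_le_liminf (.of_forall fun n => hGF n (xs n))
  · obtain ⟨xs, h, heq⟩ := hrec x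
    exact ⟨xs, h, by simp only [heq, (coe_tendsto h).limsup_eq, le_refl]⟩

lemma deltaYM_injective : Function.Injective deltaYM := injective_dirac.comp_left

lemma graphGLFn_deltaYM {n : ℕ} {u : ℝ → ℝ} (hstep : IsStepFun n u) (hu : Measurable u)
    (huI : ∀ x, u x ∈ Set.Icc (-1 : ℝ) 1) (V : ℝ → ℝ → ℝ) (ε : ℝ) :
    graphGLFn n V ε (deltaYM u) = (graphonGL V ε (deltaYM u) : EReal) := by
  have h : ∃ v : ℝ → ℝ, IsStepFun n v ∧ Measurable v ∧
      (∀ x, v x ∈ Set.Icc (-1 : ℝ) 1) ∧ deltaYM u = deltaYM v := ⟨u, hstep, hu, huI, rfl⟩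
  have choose_eq : h.choose = u := (deltaYM_injective h.choose_spec.2.2.2).symm
  simp only [graphGLFn, dif_pos h, choose_eq, graphonGL, graphonDirichlet, deltaYM, integral_dirac]

lemma graphonGL_le_graphGLFn (n : ℕ) (V : ℝ → ℝ → ℝ) (ε : ℝ) (ν : ℝ → Measure ℝ) :
    (graphonGL V ε ν : EReal) ≤ graphGLFn n V ε ν := by
  by_cases h : ∃ u : ℝ → ℝ, IsStepFun n u ∧ Measurable u ∧
      (∀ x, u x ∈ Set.Icc (-1 : ℝ) 1) ∧ ν = deltaYM u
  · obtain ⟨u, hstep, hu, huI, rfl⟩ := h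
    exact (graphGLFn_deltaYM hstep hu huI V ε).ge
  · rw [graphGLFn, dif_neg h]
    exact le_top

lemma integrableOn_stepGraphon (n : ℕ) (A : Fin n → Fin n → ℝ) :
    IntegrableOn (Function.uncurry (stepGraphon n A)) (I01 ×ˢ I01) := by
  obtain ⟨C, hC⟩ := Finite.exists_le fun z : Fin n × Fin n => |A z.1 z.2|
  have bounded (z : ℝ × ℝ) : |Function.uncurry (stepGraphon n A) z| ≤ |C| := by
    simp only [Function.uncurry, stepGraphon]
    split_ifs with hx hy
    · exact (hC (⟨_, hx⟩, ⟨_, hy⟩)).trans (le_abs_self C)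
    · simp
    · simp
  let B : ℕ × ℕ → ℝ := fun k =>
    if hx : k.1 < n then if hy : k.2 < n then A ⟨k.1, hx⟩ ⟨k.2, hy⟩ else 0 else 0
  have measurable : Measurable (Function.uncurry (stepGraphon n A)) :=
    (measurable_of_countable B).comp
      (((measurable_stepIdx n).comp measurable_fst).prodMk
        ((measurable_stepIdx n).comp measurable_snd))
  rw [IntegrableOn, Measure.volume_eq_prod, ← Measure.prod_restrict]
  exact (AEBounded.of_forall measurable bounded).integrable

theorem graphGL_gammaConv_graphonGL_general {ε : ℝ} (_hε : ε ≠ 0) {Wseq : ℕ → ℝ → ℝ → ℝ}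
    {W : ℝ → ℝ → ℝ} (hWseq : ∀ n, IntegrableOn (Function.uncurry (Wseq n)) (I01 ×ˢ I01))
    (hW : IntegrableOn (Function.uncurry W) (I01 ×ˢ I01))
    (hcut : Tendsto (fun n => cutNorm (fun x y => Wseq n x y - W x y)) atTop (𝓝 0)) :
    GammaConv (fun (νs : ℕ → YMb) (ν : YMb) => NarrowConv (fun n => (νs n).1) ν.1)
      (fun n ν => graphGLFn n (Wseq n) ε ν.1)
      (fun ν => ((graphonGL W ε ν.1 : ℝ) : EReal)) := by
  simp only [IntegrableOn, Measure.volume_eq_prod, ← Measure.prod_restrict] at hWseq hW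
  refine gammaConv_of_tendsto (G := fun n ν => graphonGL (Wseq n) ε ν.1)
    (fun n ν => graphonGL_le_graphGLFn n (Wseq n) ε ν.1)
    (fun νs ν h => h.tendsto_graphonGL hWseq hW hcut) fun ν => ?_
  obtain ⟨u, hu, huI, hstep, hconv⟩ := ν.exists_narrowConv_dirac
  exact ⟨fun n => YMb.dirac (u n) (hu n) (huI n), hconv,
    fun n => graphGLFn_deltaYM (hstep n) (hu n) (huI n) (Wseq n) ε⟩

end GammaConvergence

/-- Γ-convergence of the graph Ginzburg–Landau functionals to the graphon
Ginzburg–Landau functional. -/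
theorem graphGL_gammaConv_graphonGL
    (ε : ℝ) (hε : 0 < ε)
    (Wseq : ℕ → ℝ → ℝ → ℝ)
    (hstep : ∀ n, ∃ A : Fin n → Fin n → ℝ, (∀ i j, A i j = A j i) ∧
      (∀ i j, 0 ≤ A i j) ∧ Wseq n = stepGraphon n A)
    (hWseqBd : ∃ C : ℝ, ∀ n, (∫ x in I01, ∫ y in I01, |Wseq n x y|) ≤ C)
    (W : ℝ → ℝ → ℝ) (hWmeas : Measurable (Function.uncurry W))
    (hWnonneg : ∀ x y, 0 ≤ W x y) (hWsymm : ∀ x y, W x y = W y x)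
    (hWint : IntegrableOn (Function.uncurry W) (I01 ×ˢ I01))
    (hcut : Tendsto (fun n => cutNorm (fun x y => Wseq n x y - W x y)) atTop (nhds 0)) :
    GammaConv (fun (νs : ℕ → YMb) (ν : YMb) => NarrowConv (fun n => (νs n).1) ν.1)
      (fun n ν => graphGLFn n (Wseq n) ε ν.1)
      (fun ν => ((graphonGL W ε ν.1 : ℝ) : EReal)) := by
  refine graphGL_gammaConv_graphonGL_general hε.ne' (fun n => ?_) hWint hcut
  obtain ⟨A, -, -, hA⟩ := hstep n
  exact hA ▸ integrableOn_stepGraphon n A
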